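/- Let I ⊆ {1,…,s}, let Σ be a finite set of zero-nonzero conditions on I containing Feas(𝒫_I, Z), and let A = [I₁,…,I_m] be a finite list of subsets of I. Then Mat(A,Σ) · c(Σ,Z) = Qu(𝒫^A, Z), i.e. for every J ∈ A one has ∑_{σ ∈ Σ} σ^J · c(σ,Z) = Qu(𝒫^J, Z). -/

import Mathlib

open Classical in
/-- The invertibility `inv(a)` of an element of a field: `0` if `a = 0`, `1` otherwise,
viewed as an element of `{0,1} = Fin 2`. -/
noncomputable def zinv {C : Type*} [Field C] (a : C) : Fin 2 := if a = 0 then 0 else 1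

/-! Each point of `Z` realizes exactly one zero-nonzero condition on `I`, so summing `σ^J` over the
conditions, weighted by the sizes of their realizations, amounts to summing over the points `x` of
`Z` the value of `σ^J` at the condition realized by `x`. As a field has no zero divisors, that value
is `inv (𝒫^J x)`, and the points where it is `1` are those counted by `Qu(𝒫^J, Z)`. -/

theorem sum_mul_card_fiber_of_maps_to {α β R : Type*} [NonAssocSemiring R] [DecidableEq β]
    {s : Finset α} {t : Finset β} {g : α → β} (hg : ∀ x ∈ s, g x ∈ t) (w : β → R) :
    ∑ y ∈ t, w y * ((s.filter fun x => g x = y).card : R) = ∑ x ∈ s, w (g x) := by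
  simp only [← Finset.sum_fiberwise_of_maps_to' hg w, Finset.sum_const, nsmul_eq_mul']

section Invertibility

variable {ι α C : Type*} [Field C]

open Classical in
theorem coe_zinv (a : C) : (zinv a : ℕ) = if a ≠ 0 then 1 else 0 := by
  by_cases h : a = 0 <;> simp [zinv, h]

theorem prod_coe_zinv (J : Finset ι) (a : ι → C) :
    ∏ i ∈ J, (zinv (a i) : ℕ) = zinv (∏ i ∈ J, a i) := by
  classical
  simp only [coe_zinv, Finset.prod_boole, Finset.prod_ne_zero_iff]

open Classical in
theorem sum_coe_zinv (Z : Finset α) (g : α → C) :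
    ∑ x ∈ Z, (zinv (g x) : ℕ) = (Z.filter fun x => g x ≠ 0).card := by
  simp only [coe_zinv, Finset.card_filter]

end Invertibility

section ZeroNonzeroCondition

variable {ι C : Type*} [DecidableEq ι] [Field C] {I J : Finset ι}

/-- The zero-nonzero condition on `I` realized by a family of values `a`. Conditions on `I` are
encoded as maps on the whole index type that vanish outside `I`. -/
noncomputable def zeroNonzeroCondition (I : Finset ι) (a : ι → C) : ι → Fin 2 :=
  fun i => if i ∈ I then zinv (a i) else 0

theorem zeroNonzeroCondition_of_mem {i : ι} (hi : i ∈ I) (a : ι → C) :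
    zeroNonzeroCondition I a i = zinv (a i) :=
  if_pos hi

theorem zeroNonzeroCondition_of_notMem {i : ι} (hi : i ∉ I) (a : ι → C) :
    zeroNonzeroCondition I a i = 0 :=
  if_neg hi

theorem zeroNonzeroCondition_eq_iff {σ : ι → Fin 2} (hσ : ∀ i, i ∉ I → σ i = 0) (a : ι → C) :
    zeroNonzeroCondition I a = σ ↔ ∀ i ∈ I, zinv (a i) = σ i := by
  refine ⟨fun h i hi => ?_, fun h => funext fun i => ?_⟩
  · rw [← h, zeroNonzeroCondition_of_mem hi]
  · by_cases hi : i ∈ I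
    · rw [zeroNonzeroCondition_of_mem hi, h i hi]
    · rw [zeroNonzeroCondition_of_notMem hi, hσ i hi]

theorem prod_coe_zeroNonzeroCondition (hJ : J ⊆ I) (a : ι → C) :
    ∏ i ∈ J, (zeroNonzeroCondition I a i : ℕ) = zinv (∏ i ∈ J, a i) := by
  rw [← prod_coe_zinv]
  exact Finset.prod_congr rfl fun i hi => by rw [zeroNonzeroCondition_of_mem (hJ hi)]

end ZeroNonzeroCondition

open Classical in
theorem matrix_of_invertibility_queries_general {α ι C : Type*} [DecidableEq ι] [Field C]
    (Z : Finset α) (f : ι → α → C) {I J : Finset ι} (hJ : J ⊆ I) (Sig : Finset (ι → Fin 2))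
    (hsupp : ∀ σ ∈ Sig, ∀ i, i ∉ I → σ i = 0)
    (hFeas : ∀ x ∈ Z, zeroNonzeroCondition I (f · x) ∈ Sig) :
    ∑ σ ∈ Sig, (∏ i ∈ J, (σ i : ℕ)) * (Z.filter fun x => ∀ i ∈ I, zinv (f i x) = σ i).card
      = (Z.filter fun x => ∏ i ∈ J, f i x ≠ 0).card :=
  calc
    _ = ∑ σ ∈ Sig, (∏ i ∈ J, (σ i : ℕ)) *
          (Z.filter fun x => zeroNonzeroCondition I (f · x) = σ).card :=
      Finset.sum_congr rfl fun σ hσ => by simp only [zeroNonzeroCondition_eq_iff (hsupp σ hσ)]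
    _ = ∑ x ∈ Z, ∏ i ∈ J, (zeroNonzeroCondition I (f · x) i : ℕ) :=
      sum_mul_card_fiber_of_maps_to hFeas fun σ => ∏ i ∈ J, (σ i : ℕ)
    _ = ∑ x ∈ Z, (zinv (∏ i ∈ J, f i x) : ℕ) :=
      Finset.sum_congr rfl fun x _ => prod_coe_zeroNonzeroCondition hJ (f · x)
    _ = (Z.filter fun x => ∏ i ∈ J, f i x ≠ 0).card :=
      sum_coe_zinv Z fun x => ∏ i ∈ J, f i x

open Classical in
/-- Let `I ⊆ {1,…,s}`, `Sig` a finite set of zero-nonzero conditions on `I`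
(encoded as maps `Fin s → Fin 2` vanishing outside `I`) containing `Feas(𝒫_I, Z)`, and
`A` a finite family of subsets of `I`.  Then for every `J ∈ A`,
`∑_{σ ∈ Sig} σ^J · c(σ, Z) = Qu(𝒫^J, Z)`. -/
theorem matrix_of_invertibility_queries
    {C : Type*} [Field C] [IsAlgClosed C] {k s : ℕ}
    (Z : Finset (Fin k → C)) (P : Fin s → MvPolynomial (Fin k) C)
    (I : Finset (Fin s)) (Sig : Finset (Fin s → Fin 2))
    (hsupp : ∀ σ ∈ Sig, ∀ i, i ∉ I → σ i = 0)
    (hFeas : ∀ x ∈ Z,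
      (fun i => if i ∈ I then zinv (MvPolynomial.eval x (P i)) else 0) ∈ Sig)
    (A : Finset (Finset (Fin s))) (hA : ∀ J ∈ A, J ⊆ I) :
    ∀ J ∈ A,
      ∑ σ ∈ Sig, (∏ i ∈ J, ((σ i : ℕ))) *
          (Z.filter (fun x => ∀ i ∈ I, zinv (MvPolynomial.eval x (P i)) = σ i)).card
        = (Z.filter (fun x => MvPolynomial.eval x (∏ i ∈ J, P i) ≠ 0)).card := by
  intro J hJ
  convert matrix_of_invertibility_queries_general Z (fun i x => MvPolynomial.eval x (P i))
    (hA J hJ) Sig hsupp hFeas using 5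
  exact map_prod (MvPolynomial.eval _) _ _
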